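/- arXiv:2508.04439 — 2 statements merged into one kernel-verified Lean document; each statement's English description precedes it below -/
import Mathlib

section
/- For every j with 1 ≤ j ≤ m, the triple ρ_j is a Jacobian syzygy of f, i.e. ρ_j · ∇f = 0 in S, where · denotes the dot product of triples; equivalently ρ_j ∈ D₀(f) = {(a,b,c) ∈ S³ : a f_x + b f_y + c f_z = 0}. -/
open MvPolynomial

noncomputable abbrev S : Type := MvPolynomial (Fin 3) ℂ

/-- The gradient `∇g = (g_x, g_y, g_z)` of a polynomial `g ∈ S = ℂ[x,y,z]`. -/
noncomputable def grad (g : S) : Fin 3 → S := fun t => pderiv t g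

/-- The syzygy triple `ρ_j = Σ_{i≠j} (∏_{k≠i,j} f_k) (∇f_i × ∇f_j)`
of the 2-form `ω_j = df ∧ df_j/f_j`. -/
noncomputable def rho {m : ℕ} (F : Fin m → S) (j : Fin m) : Fin 3 → S :=
  ∑ i ∈ Finset.univ.erase j,
    (∏ k ∈ (Finset.univ.erase j).erase i, F k) • crossProduct (grad (F i)) (grad (F j))

/-!
The gradient is a derivation with values in triples. Put `g = ∏_{k ≠ j} f_k`, so that
`f = f_j g`. The Leibniz rule for `g` collapses the sum to `ρ_j = ∇g × ∇f_j`, which is orthogonal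
to both terms of `∇f = f_j ∇g + g ∇f_j`.
-/

open scoped Matrix

section Leibniz

variable {R A ι : Type*} [CommSemiring R] [CommSemiring A] [Algebra R A]

theorem derivation_prod {M : Type*} [AddCommMonoid M] [Module A M] [Module R M]
    [DecidableEq ι] (D : Derivation R A M) (s : Finset ι) (F : ι → A) :
    D (∏ i ∈ s, F i) = ∑ i ∈ s, (∏ k ∈ s.erase i, F k) • D (F i) := by
  induction s using Finset.induction_on with
  | empty => simp
  | insert a s ha ih =>
    have erase_factor : ∀ i ∈ s,
        (∏ k ∈ (insert a s).erase i, F k) • D (F i) =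
          F a • (∏ k ∈ s.erase i, F k) • D (F i) := fun i hi => by
      rw [Finset.erase_insert_of_ne (ne_of_mem_of_not_mem hi ha).symm,
        Finset.prod_insert (fun h => ha (Finset.mem_of_mem_erase h)), mul_smul]
    rw [Finset.prod_insert ha, D.leibniz, ih, Finset.sum_insert ha, Finset.erase_insert ha,
      Finset.sum_congr rfl erase_factor, Finset.smul_sum, add_comm]

/-- The derivation into a product of modules whose components are the given derivations; it
assembles partial derivatives into a gradient. -/
def derivationPi {M : ι → Type*} [∀ i, AddCommMonoid (M i)] [∀ i, Module A (M i)]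
    [∀ i, Module R (M i)] (D : ∀ i, Derivation R A (M i)) : Derivation R A (∀ i, M i) where
  toLinearMap := LinearMap.pi fun i => (D i : A →ₗ[R] M i)
  map_one_eq_zero' := funext fun i => (D i).map_one_eq_zero
  leibniz' a b := funext fun i => (D i).leibniz a b

end Leibniz

section CrossProduct

variable {R A ι : Type*} [CommSemiring R] [CommRing A] [Algebra R A]
  (D : Derivation R A (Fin 3 → A))

theorem derivation_prod_cross [DecidableEq ι] (s : Finset ι) (F : ι → A) (v : Fin 3 → A) :
    D (∏ i ∈ s, F i) ⨯₃ v = ∑ i ∈ s, (∏ k ∈ s.erase i, F k) • D (F i) ⨯₃ v := by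
  simp only [derivation_prod, map_sum, map_smul, LinearMap.sum_apply, LinearMap.smul_apply]

theorem derivation_cross_dot_derivation_mul (a b : A) : (D a ⨯₃ D b) ⬝ᵥ D (a * b) = 0 := by
  rw [D.leibniz, dotProduct_add, dotProduct_smul, dotProduct_smul, dotProduct_comm _ (D a),
    dotProduct_comm _ (D b), dot_self_cross, dot_cross_self, smul_zero, smul_zero, add_zero]

theorem rho_is_jacobian_syzygy_general [DecidableEq ι] {s : Finset ι} {j : ι} (hj : j ∈ s)
    (F : ι → A) :
    (∑ i ∈ s.erase j, (∏ k ∈ (s.erase j).erase i, F k) • D (F i) ⨯₃ D (F j)) ⬝ᵥ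
      D (∏ i ∈ s, F i) = 0 := by
  rw [← derivation_prod_cross, ← Finset.prod_erase_mul s F hj]
  exact derivation_cross_dot_derivation_mul D _ _

end CrossProduct

/-- The gradient `grad` of polynomials as a single derivation of `S` into the `S`-module of
triples; its values are definitionally those of `grad`. -/
noncomputable def gradDerivation : Derivation ℂ S (Fin 3 → S) :=
  derivationPi fun t => pderiv t

/-- for every `j`, `ρ_j` is a Jacobian syzygy of `f = f_1 ⋯ f_m`,
i.e. `ρ_j ⋅ ∇f = 0`, so `ρ_j ∈ D₀(f)`. -/
theorem rho_is_jacobian_syzygy (m : ℕ) (hm : 2 ≤ m) (F : Fin m → S) (j : Fin m) :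
    ∑ t, rho F j t * pderiv t (∏ i, F i) = 0 :=
  rho_is_jacobian_syzygy_general gradDerivation (Finset.mem_univ j) F
end

section
/- Assume ℓ(C) = 0, i.e. e_j ≥ 2 for all j. Then the S-module D₀(f) is generated by the set G = {ρ_1, ..., ρ_{m−1}, σ^x, σ^y, σ^z}, and G is a minimal generating set: no element of G lies in the S-submodule of S³ generated by the other m+1 elements of G. In particular C is an (m+2)-syzygy curve with exponents d_1 = ⋯ = d_{m−1} = d−2 and d_m = d_{m+1} = d_{m+2} = d−1. -/
open MvPolynomial

/-- The Jacobian syzygy module `D₀(f) = {(a,b,c) ∈ S³ : a f_x + b f_y + c f_z = 0}`. -/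
noncomputable def D0 (f : S) : Submodule S (Fin 3 → S) where
  carrier := {v | ∑ t, v t * pderiv t f = 0}
  add_mem' {a b} ha hb := by
    simp only [Set.mem_setOf_eq, Pi.add_apply, add_mul, Finset.sum_add_distrib] at *
    rw [ha, hb, add_zero]
  zero_mem' := by simp
  smul_mem' c v hv := by
    simp only [Set.mem_setOf_eq, Pi.smul_apply, smul_eq_mul, mul_assoc, ← Finset.mul_sum] at *
    rw [hv, mul_zero]

/-- The syzygy triple `σ^x = (0, f_z, −f_y)` of the 2-form `df ∧ dx`. -/
noncomputable def sigx (f : S) : Fin 3 → S := ![0, pderiv 2 f, -pderiv 1 f]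
/-- The syzygy triple `σ^y = (−f_z, 0, f_x)` of the 2-form `df ∧ dy`. -/
noncomputable def sigy (f : S) : Fin 3 → S := ![-pderiv 2 f, 0, pderiv 0 f]
/-- The syzygy triple `σ^z = (f_y, −f_x, 0)` of the 2-form `df ∧ dz`. -/
noncomputable def sigz (f : S) : Fin 3 → S := ![pderiv 1 f, -pderiv 0 f, 0]

/-- The candidate generating set `G = {ρ_1, …, ρ_{m−1}, σ^x, σ^y, σ^z}` (case `ℓ(C) = 0`). -/
noncomputable def G0 {m : ℕ} (F : Fin m → S) : (Fin (m - 1) ⊕ Fin 3) → (Fin 3 → S) :=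
  Sum.elim (fun j => rho F (Fin.castLE (Nat.sub_le m 1) j))
    ![sigx (∏ i, F i), sigy (∏ i, F i), sigz (∏ i, F i)]

/-!
Contracting with the Euler field turns a syzygy `v` of `f = ∏ j, f_j` into the one-form
`η = X ⨯₃ v`, for which `η / f` has logarithmic poles along every curve `f_j = 0`. Dividing `η` by
`df_j` modulo `f_j` yields a residue, and normal crossings force this residue into the ideal
generated by `f_j` and the other factors: locally this is clear away from the origin, and at the
origin it follows from the Nullstellensatz and a depth estimate. Peeling off the factors one at a
time, `η / f` is a combination of the `df_j / f_j` and a regular form; taking the wedge product with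
`df` recovers `v`, up to a scalar, as a combination of the `ρ_j` and of `σ^x, σ^y, σ^z`.

The same computation shows that all relations are consequences of `∑ j, ρ_j = 0`, which is used to
drop `ρ_m`, and of `f_j ρ_j = df ∧ df_j`. If every `f_j` has degree at least two, the coefficients
in the latter lie in the irrelevant maximal ideal, so the remaining generators are independent
modulo that ideal.
-/

open scoped Matrix

lemma constantCoeff_eq_zero_of_isHomogeneous {σ R : Type*} [CommSemiring R]
    {g : MvPolynomial σ R} {n : ℕ} (hg : g.IsHomogeneous n) (hn : n ≠ 0) : constantCoeff g = 0 := by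
  rw [constantCoeff_eq]
  exact hg.coeff_eq_zero (by simpa using hn.symm)

section PolynomialRing

variable {σ R : Type*} [CommRing R]

lemma X_mul_mem_ideal_span_X_image {s : Set σ} {i : σ} (hi : i ∉ s) {p : MvPolynomial σ R} :
    X i * p ∈ Ideal.span (X '' s) ↔ p ∈ Ideal.span (X '' s) := by
  refine ⟨fun h => mem_ideal_span_X_image.mpr fun n hn => ?_, Ideal.mul_mem_left _ _⟩
  obtain ⟨j, hj, hnj⟩ := mem_ideal_span_X_image.mp h (Finsupp.single i 1 + n) (by
    rwa [mem_support_iff, coeff_X_mul, ← mem_support_iff])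
  have hij : i ≠ j := fun hij => hi (hij ▸ hj)
  exact ⟨j, hj, by simpa [hij] using hnj⟩

variable [IsDomain R] {i j k : σ}

lemma exists_eq_X_smul_of_X_smul_eq {ι : Type*} (hij : i ≠ j) {u v : ι → MvPolynomial σ R}
    (h : (X i : MvPolynomial σ R) • u = (X j : MvPolynomial σ R) • v) :
    ∃ q : ι → MvPolynomial σ R, u = (X j : MvPolynomial σ R) • q := by
  have hdvd (t : ι) : X j ∣ u t := by
    have h₁ : (X j : MvPolynomial σ R) ∣ X i * u t := ⟨v t, congrFun h t⟩
    exact (X_dvd_mul_iff.mp h₁).resolve_left fun h₂ => hij (X_dvd_X.mp h₂).symm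
  choose q hq using hdvd
  exact ⟨q, funext hq⟩

lemma exists_eq_of_X_koszul_eq_zero (hij : i ≠ j) (hik : i ≠ k) (hjk : j ≠ k)
    {a b c : MvPolynomial σ R} (h : X k * a - X j * b + X i * c = 0) :
    ∃ p q r : MvPolynomial σ R,
      a = X i * q - X j * p ∧ b = X i * r - X k * p ∧ c = X j * r - X k * q := by
  have ha : a ∈ Ideal.span (X '' ({i, j} : Set σ)) := by
    rw [← X_mul_mem_ideal_span_X_image (i := k) (by simp [hik.symm, hjk.symm]), Set.image_pair,
      Ideal.mem_span_pair]
    exact ⟨-c, b, by linear_combination -h⟩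
  rw [Set.image_pair, Ideal.mem_span_pair] at ha
  obtain ⟨q, p, rfl⟩ := ha
  have hb : X j * (b - X k * p) = X i * (c + X k * q) := by linear_combination -h
  obtain ⟨r, hr⟩ : X i ∣ b - X k * p :=
    (X_dvd_mul_iff.mp ⟨_, hb⟩).resolve_left fun h' => hij (X_dvd_X.mp h')
  refine ⟨-p, q, r, by ring, by linear_combination hr, mul_left_cancel₀ (X_ne_zero i) ?_⟩
  linear_combination X j * hr - hb

-- The cokernel of `φ` has projective dimension at most two, hence positive depth.
lemma mem_range_of_X_smul_mem_range (hij : i ≠ j) (hik : i ≠ k) (hjk : j ≠ k)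
    {ι P : Type*} [AddCommGroup P] [Module (MvPolynomial σ R) P]
    [Module.IsTorsionFree (MvPolynomial σ R) P]
    {φ : (ι → MvPolynomial σ R) →ₗ[MvPolynomial σ R] P} {κ : ι → MvPolynomial σ R} (hκ : κ ≠ 0)
    (hker : LinearMap.ker φ = Submodule.span _ {κ}) {w : P}
    (hi : (X i : MvPolynomial σ R) • w ∈ LinearMap.range φ)
    (hj : (X j : MvPolynomial σ R) • w ∈ LinearMap.range φ)
    (hk : (X k : MvPolynomial σ R) • w ∈ LinearMap.range φ) : w ∈ LinearMap.range φ := by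
  have hdiff {s t : σ} {u v : ι → MvPolynomial σ R} (hu : φ u = (X s : MvPolynomial σ R) • w)
      (hv : φ v = (X t : MvPolynomial σ R) • w) : ∃ c : MvPolynomial σ R,
      c • κ = (X s : MvPolynomial σ R) • v - (X t : MvPolynomial σ R) • u := by
    rw [← Submodule.mem_span_singleton, ← hker, LinearMap.mem_ker, map_sub, map_smul, map_smul,
      hu, hv, smul_comm, sub_self]
  obtain ⟨u, hu⟩ := hi
  obtain ⟨v, hv⟩ := hj
  obtain ⟨z, hz⟩ := hk
  obtain ⟨a, ha⟩ := hdiff hu hv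
  obtain ⟨b, hb⟩ := hdiff hu hz
  obtain ⟨c, hc⟩ := hdiff hv hz
  have hcocycle : X k * a - X j * b + X i * c = 0 := by
    refine (smul_eq_zero.mp ?_).resolve_right hκ
    rw [add_smul, sub_smul, mul_smul, mul_smul, mul_smul, ha, hb, hc]
    module
  obtain ⟨p, q, -, rfl, -, -⟩ := exists_eq_of_X_koszul_eq_zero hij hik hjk hcocycle
  have hφκ : φ κ = 0 := by
    rw [← LinearMap.mem_ker, hker]
    exact Submodule.mem_span_singleton_self κ
  have hcomm : (X j : MvPolynomial σ R) • (u - p • κ)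
      = (X i : MvPolynomial σ R) • (v - q • κ) := by
    linear_combination (norm := module) ha
  obtain ⟨y, hy⟩ := exists_eq_X_smul_of_X_smul_eq hij.symm hcomm
  refine ⟨y, smul_right_injective P (X_ne_zero (R := R) i) ?_⟩
  calc (X i : MvPolynomial σ R) • φ y = φ (u - p • κ) := by rw [← map_smul, hy]
    _ = (X i : MvPolynomial σ R) • w := by rw [map_sub, map_smul, hφκ, smul_zero, sub_zero, hu]

end PolynomialRing

section Nullstellensatz

variable {σ K : Type*} [Finite σ] [Field K] [IsAlgClosed K]

lemma idealOfVars_le_radical {I : Ideal (MvPolynomial σ K)}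
    (h : ∀ p : σ → K, (∀ g ∈ I, eval p g = 0) → p = 0) : idealOfVars σ K ≤ I.radical := by
  rw [Ideal.span_le, Set.range_subset_iff, ← vanishingIdeal_zeroLocus_eq_radical (K := K)]
  intro t p hp
  simp [h p fun g hg => by simpa [aeval_eq_eval] using hp g hg]

-- By the Nullstellensatz the class of `w` modulo `B` is killed by a power of the maximal ideal.
lemma mem_of_colon_vanishes_only_at_zero {M : Type*} [AddCommGroup M]
    [Module (MvPolynomial σ K) M] {B : Submodule (MvPolynomial σ K) M}
    (hB : ∀ w : M, (∀ t, (X t : MvPolynomial σ K) • w ∈ B) → w ∈ B) {w : M}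
    (hw : ∀ p : σ → K, (∀ g : MvPolynomial σ K, g • w ∈ B → eval p g = 0) → p = 0) :
    w ∈ B := by
  have hpow (n : ℕ) : ∀ w : M, (∀ g ∈ idealOfVars σ K ^ n, g • w ∈ B) → w ∈ B := by
    induction n with
    | zero => exact fun w hw => by simpa using hw 1 (by simp)
    | succ n ih =>
      refine fun w hw => ih w fun g hg => hB _ fun t => ?_
      rw [← mul_smul]
      refine hw _ ?_
      rw [pow_succ']
      exact Ideal.mul_mem_mul (Ideal.subset_span ⟨t, rfl⟩) hg
  obtain ⟨n, hn⟩ := Ideal.exists_pow_le_of_le_radical_of_fg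
    (idealOfVars_le_radical (I := B.comap (LinearMap.toSpanSingleton _ M w)) hw)
    (idealOfVars_fg σ K)
  exact hpow n w fun g hg => hn hg

lemma isUnit_of_eval_eq_zero [Nontrivial σ] {r : MvPolynomial σ K}
    (h : ∀ p : σ → K, eval p r = 0 → p = 0) : IsUnit r := by
  have hrad : idealOfVars σ K ≤ (Ideal.span {r}).radical :=
    idealOfVars_le_radical fun p hp => h p (hp r (Ideal.mem_span_singleton_self r))
  have hdvd (t : σ) : ∃ n, r ∣ X t ^ n := by
    obtain ⟨n, hn⟩ := hrad (Ideal.subset_span ⟨t, rfl⟩)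
    exact ⟨n, Ideal.mem_span_singleton.mp hn⟩
  obtain ⟨i, j, hij⟩ := exists_pair_ne σ
  obtain ⟨a, ha⟩ := hdvd i
  obtain ⟨b, hb⟩ := hdvd j
  have hrel : IsRelPrime (X i : MvPolynomial σ K) (X j) :=
    (X_prime.irreducible.isRelPrime_iff_not_dvd).mpr fun h => hij (X_dvd_X.mp h)
  exact hrel.pow ha hb

end Nullstellensatz


/-- A vector whose entries have no common divisors other than units. -/
def IsPrimitiveVector {ι R : Type*} [Monoid R] (a : ι → R) : Prop :=
  ∀ r, (∀ t, r ∣ a t) → IsUnit r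

namespace IsPrimitiveVector

variable {ι R : Type*} [CommRing R] {a : ι → R}

lemma ne_zero [Nontrivial R] (ha : IsPrimitiveVector a) : a ≠ 0 := by
  rintro rfl
  exact not_isUnit_zero (ha 0 fun _ => dvd_rfl)

variable [IsDomain R] [UniqueFactorizationMonoid R]

lemma dvd_of_dvd_mul (ha : IsPrimitiveVector a) {q r : R} (h : ∀ t, q ∣ r * a t) : q ∣ r := by
  induction q using UniqueFactorizationMonoid.induction_on_prime generalizing r with
  | h₁ =>
    obtain ⟨t, ht⟩ := Function.ne_iff.mp ha.ne_zero
    exact zero_dvd_iff.mpr ((mul_eq_zero.mp (zero_dvd_iff.mp (h t))).resolve_right ht)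
  | h₂ q hq => exact hq.dvd
  | h₃ q p _ hp ih =>
    obtain ⟨r, rfl⟩ : p ∣ r := by
      by_contra hpr
      exact hp.not_isUnit (ha p fun t =>
        (hp.dvd_or_dvd ((dvd_mul_right p q).trans (h t))).resolve_left hpr)
    refine mul_dvd_mul_left p (ih fun t => (mul_dvd_mul_iff_left hp.ne_zero).mp ?_)
    rw [← mul_assoc]
    exact h t

lemma exists_eq_smul (ha : IsPrimitiveVector a) {v : ι → R}
    (h : ∀ s t, v s * a t = v t * a s) : ∃ c : R, v = c • a := by
  obtain ⟨i, hi⟩ := Function.ne_iff.mp ha.ne_zero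
  obtain ⟨c, hc⟩ : a i ∣ v i := ha.dvd_of_dvd_mul fun t => ⟨v t, by rw [h i t, mul_comm]⟩
  refine ⟨c, funext fun t => mul_right_cancel₀ hi ?_⟩
  rw [h t i, hc, Pi.smul_apply, smul_eq_mul]
  ring

lemma exists_eq_smul_of_cross_eq_zero {a v : Fin 3 → R} (ha : IsPrimitiveVector a)
    (h : a ⨯₃ v = 0) : ∃ c : R, v = c • a := by
  refine ha.exists_eq_smul fun s t => ?_
  have hst := congrFun (cross_cross_eq_smul_sub_smul a v (Pi.single t 1)) s
  simp only [h, map_zero, LinearMap.zero_apply, Pi.zero_apply, dotProduct_single_one,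
    Pi.sub_apply, Pi.smul_apply, smul_eq_mul] at hst
  linear_combination -hst

end IsPrimitiveVector

/-- A family of polynomials whose only possible common zero is the origin. -/
def VanishesOnlyAtZero {ι σ K : Type*} [CommSemiring K] (a : ι → MvPolynomial σ K) : Prop :=
  ∀ p : σ → K, (∀ t, eval p (a t) = 0) → p = 0

lemma VanishesOnlyAtZero.isPrimitiveVector {ι σ K : Type*} [Finite σ] [Nontrivial σ] [Field K]
    [IsAlgClosed K] {a : ι → MvPolynomial σ K} (ha : VanishesOnlyAtZero a) :
    IsPrimitiveVector a := by
  refine fun r hr => isUnit_of_eval_eq_zero fun p hp => ha p fun t => ?_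
  obtain ⟨c, hc⟩ := hr t
  rw [hc, map_mul, hp, zero_mul]

section ThreeVariables

variable {K : Type*} [Field K] [IsAlgClosed K]

lemma mem_range_of_colon_vanishes_only_at_zero {ι P : Type*} [AddCommGroup P]
    [Module (MvPolynomial (Fin 3) K) P] [Module.IsTorsionFree (MvPolynomial (Fin 3) K) P]
    {φ : (ι → MvPolynomial (Fin 3) K) →ₗ[MvPolynomial (Fin 3) K] P}
    {κ : ι → MvPolynomial (Fin 3) K} (hκ : κ ≠ 0)
    (hker : LinearMap.ker φ = Submodule.span _ {κ}) {w : P}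
    (hw : ∀ p : Fin 3 → K, (∀ g : MvPolynomial (Fin 3) K,
      g • w ∈ LinearMap.range φ → eval p g = 0) → p = 0) : w ∈ LinearMap.range φ :=
  mem_of_colon_vanishes_only_at_zero
    (fun _ h => mem_range_of_X_smul_mem_range (i := 0) (j := 1) (k := 2) (by decide) (by decide)
      (by decide) hκ hker (h 0) (h 1) (h 2)) hw

lemma mem_span_pair_of_colon_vanishes_only_at_zero {f g b : MvPolynomial (Fin 3) K}
    (hfg : IsRelPrime f g) (hf : f ≠ 0)
    (hb : ∀ p : Fin 3 → K, (∀ c, c * b ∈ Ideal.span {f, g} → eval p c = 0) → p = 0) :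
    b ∈ Ideal.span {f, g} := by
  let φ := Fintype.linearCombination (MvPolynomial (Fin 3) K) ![f, g]
  have hφ (q : Fin 2 → MvPolynomial (Fin 3) K) : φ q = q 0 * f + q 1 * g := by
    simp [φ, Fintype.linearCombination_apply]
  have hrange : LinearMap.range φ = Ideal.span {f, g} := by
    rw [Fintype.range_linearCombination, Matrix.range_cons_cons_empty, Ideal.span]
  have hker : LinearMap.ker φ = Submodule.span _ {![g, -f]} := by
    refine le_antisymm (fun q hq => ?_) ?_
    · rw [LinearMap.mem_ker, hφ] at hq
      obtain ⟨c, hc⟩ : f ∣ q 1 := hfg.dvd_of_dvd_mul_left ⟨-q 0, by linear_combination hq⟩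
      have h₀ : q 0 = -c * g := mul_left_cancel₀ hf (by linear_combination hq - g * hc)
      refine Submodule.mem_span_singleton.mpr ⟨-c, ?_⟩
      ext t : 1
      fin_cases t
      · simp [h₀]
      · simp [hc, mul_comm]
    · rw [Submodule.span_singleton_le_iff_mem, LinearMap.mem_ker, hφ]
      simp [mul_comm]
  have hκ : (![g, -f] : Fin 2 → MvPolynomial (Fin 3) K) ≠ 0 := fun h => hf (by
    simpa using congrFun h 1)
  rw [← hrange] at hb ⊢
  exact mem_range_of_colon_vanishes_only_at_zero hκ hker hb

variable {a : Fin 3 → MvPolynomial (Fin 3) K}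

namespace VanishesOnlyAtZero

-- Exactness of the Koszul complex of `a` at its middle term.
lemma mem_range_cross_of_dotProduct_eq_zero (ha : VanishesOnlyAtZero a)
    {w : Fin 3 → MvPolynomial (Fin 3) K} (hw : a ⬝ᵥ w = 0) :
    w ∈ LinearMap.range (crossProduct a) := by
  have hker : LinearMap.ker (crossProduct a) = Submodule.span _ {a} := by
    refine le_antisymm (fun q hq => ?_) ?_
    · obtain ⟨c, rfl⟩ := ha.isPrimitiveVector.exists_eq_smul_of_cross_eq_zero hq
      exact Submodule.mem_span_singleton.mpr ⟨c, rfl⟩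
    · rw [Submodule.span_singleton_le_iff_mem]
      exact cross_self a
  refine mem_range_of_colon_vanishes_only_at_zero ha.isPrimitiveVector.ne_zero hker
    fun p hp => ha p fun t => hp _ ⟨w ⨯₃ Pi.single t 1, ?_⟩
  rw [cross_cross_eq_smul_sub_smul', dotProduct_comm w, hw, zero_smul, sub_zero,
    dotProduct_single_one]

-- The de Rham division lemma modulo `g`.
lemma exists_eq_smul_add_smul_of_dvd_cross (ha : VanishesOnlyAtZero a)
    {g : MvPolynomial (Fin 3) K} (hg : g ≠ 0) {η : Fin 3 → MvPolynomial (Fin 3) K}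
    (hη : ∀ t, g ∣ (η ⨯₃ a) t) :
    ∃ (b : MvPolynomial (Fin 3) K) (θ : Fin 3 → MvPolynomial (Fin 3) K), η = b • a + g • θ := by
  choose w hw using hη
  replace hw : η ⨯₃ a = g • w := funext hw
  have haw : a ⬝ᵥ w = 0 := by
    refine (smul_eq_zero.mp ?_).resolve_left hg
    rw [← dotProduct_smul, ← hw, dot_cross_self]
  obtain ⟨u, hu⟩ := ha.mem_range_cross_of_dotProduct_eq_zero haw
  have hcross : a ⨯₃ (η + g • u) = 0 := by
    rw [map_add, map_smul, hu, ← hw, cross_anticomm']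
  obtain ⟨b, hb⟩ := ha.isPrimitiveVector.exists_eq_smul_of_cross_eq_zero hcross
  exact ⟨b, -u, by rw [← hb, smul_neg, add_neg_cancel_right]⟩

end VanishesOnlyAtZero

end ThreeVariables


/-- The curves `F i = 0` are smooth, any two of them cross normally, and no three of them meet. -/
structure IsNormalCrossing {ι : Type*} (F : ι → S) : Prop where
  smooth : ∀ j, VanishesOnlyAtZero (grad (F j))
  transversal : ∀ i j, i ≠ j → ∀ p : Fin 3 → ℂ, p ≠ 0 → eval p (F i) = 0 → eval p (F j) = 0 →
    LinearIndependent ℂ ![fun t => eval p (grad (F i) t), fun t => eval p (grad (F j) t)]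
  no_triple_point : ∀ i j k, i ≠ j → i ≠ k → j ≠ k → ∀ p : Fin 3 → ℂ, p ≠ 0 →
    ¬(eval p (F i) = 0 ∧ eval p (F j) = 0 ∧ eval p (F k) = 0)

/-- The form `η`, encoded by its coefficient triple, is the numerator of a one-form
`η / ∏ j ∈ s, F j` with logarithmic poles along the curves `F j = 0`, `j ∈ s`: each `F j` divides
`η ∧ dF j`. -/
def IsLogarithmicNumerator {ι : Type*} (F : ι → S) (s : Finset ι) (η : Fin 3 → S) : Prop :=
  ∀ j ∈ s, ∀ t, F j ∣ (η ⨯₃ grad (F j)) t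

lemma grad_mul (f g : S) : grad (f * g) = g • grad f + f • grad g := by
  ext t : 1
  simp only [grad, Derivation.leibniz, smul_eq_mul, Pi.add_apply, Pi.smul_apply, add_comm]

lemma eval_cross {R : Type*} [CommRing R] {σ : Type*} (p : σ → R)
    (u v : Fin 3 → MvPolynomial σ R) :
    (fun t => eval p (u t)) ⨯₃ (fun t => eval p (v t)) = fun t => eval p ((u ⨯₃ v) t) := by
  ext t
  fin_cases t <;> simp [cross_apply]

namespace IsNormalCrossing

variable {ι : Type*} {F : ι → S} (h : IsNormalCrossing F)
include h

lemma isPrimitiveVector_grad (j : ι) : IsPrimitiveVector (grad (F j)) :=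
  (h.smooth j).isPrimitiveVector

lemma ne_zero (j : ι) : F j ≠ 0 := by
  intro h₀
  refine (h.isPrimitiveVector_grad j).ne_zero ?_
  ext t : 1
  simp [h₀, grad]

lemma prod_ne_zero [Fintype ι] : ∏ j, F j ≠ 0 :=
  Finset.prod_ne_zero_iff.mpr fun j _ => h.ne_zero j

lemma degree_ne_zero {j : ι} {d : ℕ} (hj : (F j).IsHomogeneous d) : d ≠ 0 := by
  rintro rfl
  rw [← totalDegree_zero_iff_isHomogeneous, totalDegree_eq_zero_iff_eq_C] at hj
  refine (h.isPrimitiveVector_grad j).ne_zero ?_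
  ext t : 1
  rw [hj, grad, pderiv_C, Pi.zero_apply]

lemma sum_degree_ne_zero [Fintype ι] [Nonempty ι] {e : ι → ℕ}
    (hhom : ∀ j, (F j).IsHomogeneous (e j)) : ∑ j, e j ≠ 0 :=
  (Finset.sum_pos (fun j _ => Nat.pos_of_ne_zero (h.degree_ne_zero (hhom j)))
    Finset.univ_nonempty).ne'

lemma exists_eval_cross_grad_ne_zero {i j : ι} (hij : i ≠ j) {p : Fin 3 → ℂ} (hp : p ≠ 0)
    (hi : eval p (F i) = 0) (hj : eval p (F j) = 0) :
    ∃ t, eval p ((grad (F i) ⨯₃ grad (F j)) t) ≠ 0 := by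
  have hcross := crossProduct_ne_zero_iff_linearIndependent.mpr (h.transversal i j hij p hp hi hj)
  rw [eval_cross] at hcross
  exact Function.ne_iff.mp hcross

lemma isRelPrime {i j : ι} (hij : i ≠ j) : IsRelPrime (F i) (F j) := by
  rintro r ⟨a, ha⟩ ⟨b, hb⟩
  refine isUnit_of_eval_eq_zero fun p hr => ?_
  by_contra hp
  have hi : eval p (F i) = 0 := by rw [ha, map_mul, hr, zero_mul]
  have hj : eval p (F j) = 0 := by rw [hb, map_mul, hr, zero_mul]
  obtain ⟨t, ht⟩ := h.exists_eval_cross_grad_ne_zero hij hp hi hj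
  refine ht ?_
  rw [ha, hb, grad_mul, grad_mul]
  simp [hr]

lemma isRelPrime_prod {j : ι} {s : Finset ι} (hj : j ∉ s) : IsRelPrime (F j) (∏ k ∈ s, F k) :=
  IsRelPrime.prod_right fun _ hk => h.isRelPrime fun hjk => hj (hjk ▸ hk)

lemma residue_mem_span_pair {i j : ι} (hij : i ≠ j) {b : S} {θ : Fin 3 → S}
    (hη : ∀ t, F j ∣ ((b • grad (F i) + F i • θ) ⨯₃ grad (F j)) t) :
    b ∈ Ideal.span {F i, F j} := by
  refine mem_span_pair_of_colon_vanishes_only_at_zero (h.isRelPrime hij) (h.ne_zero i)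
    fun p hp => ?_
  by_contra hp₀
  have hi : eval p (F i) = 0 :=
    hp _ (Ideal.mul_mem_right _ _ (Ideal.subset_span (Set.mem_insert _ _)))
  have hj : eval p (F j) = 0 :=
    hp _ (Ideal.mul_mem_right _ _ (Ideal.subset_span (Set.mem_insert_of_mem _ rfl)))
  obtain ⟨t, ht⟩ := h.exists_eval_cross_grad_ne_zero hij hp₀ hi hj
  refine ht (hp _ ?_)
  obtain ⟨q, hq⟩ := hη t
  simp only [map_add, map_smul, LinearMap.add_apply, LinearMap.smul_apply, Pi.add_apply,
    Pi.smul_apply, smul_eq_mul] at hq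
  exact Ideal.mem_span_pair.mpr ⟨-(θ ⨯₃ grad (F j)) t, q, by linear_combination -hq⟩

-- On `F i = 0`, the functions `F j` have disjoint zero sets, so vanishing conditions multiply.
lemma mem_span_pair_prod {i : ι} {s : Finset ι} (hi : i ∉ s) {b : S}
    (hb : ∀ j ∈ s, b ∈ Ideal.span {F i, F j}) : b ∈ Ideal.span {F i, ∏ k ∈ s, F k} := by
  classical
  induction s using Finset.induction_on with
  | empty => exact Ideal.mem_span_pair.mpr ⟨0, b, by simp⟩
  | insert j s hj ih =>
    rw [Finset.mem_insert, not_or] at hi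
    rw [Finset.forall_mem_insert] at hb
    obtain ⟨α, β, rfl⟩ := Ideal.mem_span_pair.mp (ih hi.2 hb.2)
    have hFi : F i ∈ Ideal.span {F i, F j} := Ideal.subset_span (Set.mem_insert _ _)
    have hFj : F j ∈ Ideal.span {F i, F j} := Ideal.subset_span (Set.mem_insert_of_mem _ rfl)
    have hβ : β ∈ Ideal.span {F i, F j} := by
      refine mem_span_pair_of_colon_vanishes_only_at_zero (h.isRelPrime hi.1) (h.ne_zero i)
        fun p hp => ?_
      by_contra hp₀
      have hprod : eval p (∏ k ∈ s, F k) = 0 := by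
        refine hp _ ?_
        rw [mul_comm]
        exact (Ideal.add_mem_iff_right _ (Ideal.mul_mem_left _ α hFi)).mp hb.1
      rw [map_prod, Finset.prod_eq_zero_iff] at hprod
      obtain ⟨k, hk, hk₀⟩ := hprod
      exact h.no_triple_point i j k hi.1 (fun hik => hi.2 (hik ▸ hk)) (fun hjk => hj (hjk ▸ hk))
        p hp₀ ⟨hp _ (Ideal.mul_mem_right _ _ hFi), hp _ (Ideal.mul_mem_right _ _ hFj), hk₀⟩
    obtain ⟨γ, δ, rfl⟩ := Ideal.mem_span_pair.mp hβ
    rw [Finset.prod_insert hj, Ideal.mem_span_pair]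
    exact ⟨α + γ * ∏ k ∈ s, F k, δ, by ring⟩

lemma exists_eq_of_isLogarithmicNumerator_insert [DecidableEq ι] {i : ι} {s : Finset ι}
    (hi : i ∉ s) {η : Fin 3 → S} (hη : IsLogarithmicNumerator F (insert i s) η) :
    ∃ (a : S) (θ : Fin 3 → S), IsLogarithmicNumerator F s θ ∧
      η = (a * ∏ k ∈ s, F k) • grad (F i) + F i • θ := by
  obtain ⟨b, θ, rfl⟩ := (h.smooth i).exists_eq_smul_add_smul_of_dvd_cross (h.ne_zero i)
    (hη i (Finset.mem_insert_self i s))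
  have hne {j : ι} (hj : j ∈ s) : i ≠ j := fun hij => hi (hij ▸ hj)
  obtain ⟨c, a, rfl⟩ := Ideal.mem_span_pair.mp <| h.mem_span_pair_prod hi fun j hj =>
    h.residue_mem_span_pair (hne hj) (hη j (Finset.mem_insert_of_mem hj))
  have heq : (c * F i + a * ∏ k ∈ s, F k) • grad (F i) + F i • θ
      = (a * ∏ k ∈ s, F k) • grad (F i) + F i • (θ + c • grad (F i)) := by
    module
  rw [heq] at hη ⊢
  refine ⟨a, θ + c • grad (F i), fun j hj t => ?_, rfl⟩
  have hdvd := hη j (Finset.mem_insert_of_mem hj) t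
  rw [map_add, map_smul, map_smul, LinearMap.add_apply, LinearMap.smul_apply,
    LinearMap.smul_apply, Pi.add_apply, Pi.smul_apply, Pi.smul_apply, smul_eq_mul, smul_eq_mul,
    dvd_add_right (((Finset.dvd_prod_of_mem F hj).mul_left a).mul_right _)] at hdvd
  exact (h.isRelPrime (hne hj).symm).dvd_of_dvd_mul_left hdvd

lemma exists_eq_of_isLogarithmicNumerator [DecidableEq ι] {s : Finset ι} {η : Fin 3 → S}
    (hη : IsLogarithmicNumerator F s η) :
    ∃ (a : ι → S) (θ : Fin 3 → S),
      η = ∑ j ∈ s, (a j * ∏ k ∈ s.erase j, F k) • grad (F j) + (∏ k ∈ s, F k) • θ := by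
  induction s using Finset.induction_on generalizing η with
  | empty => exact ⟨0, η, by simp⟩
  | insert i s hi ih =>
    obtain ⟨b, η', hη', rfl⟩ := h.exists_eq_of_isLogarithmicNumerator_insert hi hη
    obtain ⟨a, θ, rfl⟩ := ih hη'
    refine ⟨Function.update a i b, θ, ?_⟩
    rw [Finset.sum_insert hi, Finset.prod_insert hi, Finset.erase_insert hi, smul_add,
      Finset.smul_sum, Function.update_self, add_assoc, mul_smul (F i)]
    congr 2
    refine Finset.sum_congr rfl fun j hj => ?_
    have hij : i ≠ j := fun hij => hi (hij ▸ hj)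
    rw [Function.update_of_ne hij.symm, Finset.erase_insert_of_ne hij,
      Finset.prod_insert (fun hi' => hi (Finset.mem_of_mem_erase hi')), smul_smul, mul_left_comm]

end IsNormalCrossing

lemma mem_D0 {f : S} {v : Fin 3 → S} : v ∈ D0 f ↔ v ⬝ᵥ grad f = 0 :=
  Iff.rfl

lemma cross_mem_D0 (f : S) (θ : Fin 3 → S) : grad f ⨯₃ θ ∈ D0 f := by
  rw [mem_D0, dotProduct_comm, dot_self_cross]

lemma X_dotProduct_grad {f : S} {d : ℕ} (hf : f.IsHomogeneous d) :
    (X : Fin 3 → S) ⬝ᵥ grad f = C (d : ℂ) * f := by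
  rw [map_natCast, ← nsmul_eq_mul]
  exact hf.sum_X_mul_pderiv

lemma grad_cross_X_cross_of_mem_D0 {f : S} {d : ℕ} (hf : f.IsHomogeneous d) {v : Fin 3 → S}
    (hv : v ∈ D0 f) : grad f ⨯₃ (X ⨯₃ v) = f • (-C (d : ℂ) : S) • v := by
  rw [← cross_anticomm, cross_cross_eq_smul_sub_smul, X_dotProduct_grad hf, mem_D0.mp hv]
  module

lemma dvd_of_dvd_grad {f r : S} {d : ℕ} (hf : f.IsHomogeneous d) (hd : d ≠ 0)
    (hr : ∀ t, r ∣ grad f t) : r ∣ f := by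
  have hunit : IsUnit (C (d : ℂ) : S) := (isUnit_iff_ne_zero.mpr (Nat.cast_ne_zero.mpr hd)).map C
  rw [← hunit.dvd_mul_left, ← X_dotProduct_grad hf]
  exact Finset.dvd_sum fun t _ => (hr t).mul_left _

lemma grad_prod {ι : Type*} [DecidableEq ι] (F : ι → S) (s : Finset ι) :
    grad (∏ k ∈ s, F k) = ∑ j ∈ s, (∏ k ∈ s.erase j, F k) • grad (F j) := by
  induction s using Finset.induction_on with
  | empty =>
    ext t : 1
    simp [grad]
  | insert i s hi ih =>
    rw [Finset.sum_insert hi, Finset.prod_insert hi, Finset.erase_insert hi, grad_mul, ih,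
      Finset.smul_sum]
    congr 1
    refine Finset.sum_congr rfl fun j hj => ?_
    have hij : i ≠ j := fun hij => hi (hij ▸ hj)
    rw [Finset.erase_insert_of_ne hij,
      Finset.prod_insert (fun hi' => hi (Finset.mem_of_mem_erase hi')), smul_smul]

lemma dvd_sum_prod_erase_mul_iff {ι R : Type*} [DecidableEq ι] [CommRing R] {F : ι → R}
    {s : Finset ι} {j : ι} (hj : j ∈ s) {q : R} (hq : q ∣ F j) (b : ι → R) :
    q ∣ ∑ i ∈ s, (∏ k ∈ s.erase i, F k) * b i ↔ q ∣ (∏ k ∈ s.erase j, F k) * b j := by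
  rw [← Finset.add_sum_erase s _ hj]
  refine dvd_add_left (Finset.dvd_sum fun i hi => Dvd.dvd.mul_right (hq.trans ?_) _)
  exact Finset.dvd_prod_of_mem F (Finset.mem_erase.mpr ⟨(Finset.ne_of_mem_erase hi).symm, hj⟩)

section Rho

variable {m : ℕ} (F : Fin m → S)

lemma smul_rho (j : Fin m) : F j • rho F j = grad (∏ i, F i) ⨯₃ grad (F j) := by
  rw [grad_prod, map_sum, LinearMap.sum_apply, rho, Finset.smul_sum,
    ← Finset.add_sum_erase Finset.univ _ (Finset.mem_univ j), map_smul, LinearMap.smul_apply,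
    cross_self, smul_zero, zero_add]
  refine Finset.sum_congr rfl fun i hi => ?_
  have hij : j ≠ i := (Finset.ne_of_mem_erase hi).symm
  rw [map_smul, LinearMap.smul_apply, smul_smul, Finset.erase_right_comm,
    Finset.mul_prod_erase _ _ (Finset.mem_erase.mpr ⟨hij, Finset.mem_univ j⟩)]

lemma prod_smul_sum_smul_rho_add_cross (a : Fin m → S) (θ : Fin 3 → S) :
    (∏ i, F i) • (∑ j, a j • rho F j + grad (∏ i, F i) ⨯₃ θ) =
      grad (∏ i, F i) ⨯₃ (∑ j, (a j * ∏ k ∈ Finset.univ.erase j, F k) • grad (F j)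
        + (∏ i, F i) • θ) := by
  rw [map_add, map_smul, map_sum, smul_add, Finset.smul_sum]
  congr 1
  refine Finset.sum_congr rfl fun j _ => ?_
  rw [map_smul, ← smul_rho, smul_smul, smul_smul, ← Finset.mul_prod_erase _ F (Finset.mem_univ j)]
  congr 1
  ring

variable {F}

lemma sum_rho_eq_zero (hF : ∏ i, F i ≠ 0) : ∑ j, rho F j = 0 := by
  have hcross := prod_smul_sum_smul_rho_add_cross F 1 0
  simp only [Pi.one_apply, one_smul, one_mul, map_zero, add_zero, smul_zero] at hcross
  rw [← grad_prod, cross_self] at hcross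
  exact (smul_eq_zero.mp hcross).resolve_left hF

lemma rho_mem_D0 {j : Fin m} (hj : F j ≠ 0) : rho F j ∈ D0 (∏ i, F i) := by
  have hsmul := cross_mem_D0 (∏ i, F i) (grad (F j))
  rw [← smul_rho, mem_D0, smul_dotProduct] at hsmul
  exact (smul_eq_zero.mp hsmul).resolve_left hj

end Rho

namespace IsNormalCrossing

section Fintype

variable {ι : Type*} [Fintype ι] {F : ι → S} (h : IsNormalCrossing F)
include h

lemma dvd_of_dvd_sum_prod_erase_mul [DecidableEq ι] {j : ι} {b : ι → S}
    (hb : F j ∣ ∑ i, (∏ k ∈ Finset.univ.erase i, F k) * b i) : F j ∣ b j :=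
  (h.isRelPrime_prod (Finset.notMem_erase j _)).dvd_of_dvd_mul_left
    ((dvd_sum_prod_erase_mul_iff (Finset.mem_univ j) dvd_rfl b).mp hb)

lemma dvd_dotProduct_grad_of_mem_D0 {v : Fin 3 → S} (hv : v ∈ D0 (∏ i, F i)) (j : ι) :
    F j ∣ v ⬝ᵥ grad (F j) := by
  classical
  refine h.dvd_of_dvd_sum_prod_erase_mul (b := fun i => v ⬝ᵥ grad (F i)) ?_
  rw [mem_D0, grad_prod, dotProduct_sum] at hv
  simp only [dotProduct_smul, smul_eq_mul] at hv
  rw [hv]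
  exact dvd_zero _

lemma isPrimitiveVector_grad_prod {d : ℕ} (hf : (∏ i, F i).IsHomogeneous d) (hd : d ≠ 0) :
    IsPrimitiveVector (grad (∏ i, F i)) := by
  classical
  intro r hr
  have hrf : r ∣ ∏ i, F i := dvd_of_dvd_grad hf hd hr
  by_contra hru
  obtain ⟨q, hq, hqr⟩ := WfDvdMonoid.exists_irreducible_factor hru
    (ne_zero_of_dvd_ne_zero h.prod_ne_zero hrf)
  obtain ⟨j, -, hj⟩ := hq.prime.exists_mem_finset_dvd (hqr.trans hrf)
  refine hq.not_isUnit (h.isPrimitiveVector_grad j q fun t => ?_)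
  have hqt : q ∣ ∑ i, (∏ k ∈ Finset.univ.erase i, F k) * grad (F i) t := by
    simpa [grad_prod] using hqr.trans (hr t)
  rw [dvd_sum_prod_erase_mul_iff (Finset.mem_univ j) hj] at hqt
  exact (hq.prime.dvd_or_dvd hqt).resolve_left fun hprod =>
    hq.not_isUnit (h.isRelPrime_prod (Finset.notMem_erase j _) hj hprod)

end Fintype

variable {m : ℕ} {F : Fin m → S} (h : IsNormalCrossing F) {e : Fin m → ℕ}
  (hhom : ∀ j, (F j).IsHomogeneous (e j))
include h

include hhom in
lemma isLogarithmicNumerator_X_cross {v : Fin 3 → S} (hv : v ∈ D0 (∏ i, F i)) :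
    IsLogarithmicNumerator F Finset.univ (X ⨯₃ v) := by
  intro j _ t
  rw [cross_cross_eq_smul_sub_smul, X_dotProduct_grad (hhom j)]
  exact dvd_sub ((dvd_mul_left _ _).mul_right _)
    ((h.dvd_dotProduct_grad_of_mem_D0 hv j).mul_right _)

include hhom in
lemma exists_eq_sum_smul_rho_add_cross (hd : ∑ j, e j ≠ 0) {v : Fin 3 → S}
    (hv : v ∈ D0 (∏ i, F i)) :
    ∃ (a : Fin m → S) (θ : Fin 3 → S), v = ∑ j, a j • rho F j + grad (∏ i, F i) ⨯₃ θ := by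
  have hf : (∏ i, F i).IsHomogeneous (∑ j, e j) := IsHomogeneous.prod _ _ _ fun j _ => hhom j
  obtain ⟨a, θ, hη⟩ :=
    h.exists_eq_of_isLogarithmicNumerator (h.isLogarithmicNumerator_X_cross hhom hv)
  have hcontract := grad_cross_X_cross_of_mem_D0 hf hv
  rw [hη, ← prod_smul_sum_smul_rho_add_cross] at hcontract
  replace hcontract := smul_right_injective _ h.prod_ne_zero hcontract
  set d : ℂ := ((∑ j, e j : ℕ) : ℂ)
  have hinv : (C (-d⁻¹) : S) * -C d = 1 := by
    rw [← C_neg, ← C_mul, neg_mul_neg, inv_mul_cancel₀ (Nat.cast_ne_zero.mpr hd), C_1]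
  refine ⟨fun j => C (-d⁻¹) * a j, (C (-d⁻¹) : S) • θ, ?_⟩
  simp only [mul_smul]
  rw [← Finset.smul_sum, map_smul, ← smul_add, hcontract, smul_smul, hinv, one_smul]

-- Up to the relation `∑ j, rho F j = 0`, the relations come from `F j • rho F j = df ∧ dF j`.
lemma exists_eq_of_sum_smul_rho_add_cross_eq_zero
    (hprim : IsPrimitiveVector (grad (∏ i, F i))) {a : Fin m → S} {θ : Fin 3 → S}
    (hrel : ∑ j, a j • rho F j + grad (∏ i, F i) ⨯₃ θ = 0) :
    ∃ (c : S) (b : Fin m → S), (∀ j, a j = c + F j * b j) ∧ θ = -∑ j, b j • grad (F j) := by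
  have hcross := prod_smul_sum_smul_rho_add_cross F a θ
  rw [hrel, smul_zero] at hcross
  obtain ⟨c, hc⟩ := hprim.exists_eq_smul_of_cross_eq_zero hcross.symm
  have hsum (t : Fin 3) : ∑ j, (∏ k ∈ Finset.univ.erase j, F k) * ((a j - c) * grad (F j) t)
      = (∏ i, F i) * -θ t := by
    have hct := congrFun hc t
    simp only [grad_prod, Pi.add_apply, Finset.sum_apply, Pi.smul_apply, smul_eq_mul,
      Finset.mul_sum] at hct
    rw [← eq_sub_iff_add_eq', ← Finset.sum_sub_distrib] at hct
    rw [mul_neg, ← neg_eq_iff_eq_neg, hct, ← Finset.sum_neg_distrib]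
    exact Finset.sum_congr rfl fun j _ => by ring
  have hdvd (j : Fin m) : F j ∣ a j - c := by
    refine (h.isPrimitiveVector_grad j).dvd_of_dvd_mul fun t => ?_
    refine h.dvd_of_dvd_sum_prod_erase_mul (b := fun i => (a i - c) * grad (F i) t) ?_
    rw [hsum]
    exact (Finset.dvd_prod_of_mem F (Finset.mem_univ j)).mul_right _
  choose b hb using hdvd
  refine ⟨c, b, fun j => by rw [← hb, add_sub_cancel], ?_⟩
  rw [← neg_eq_iff_eq_neg]
  ext t : 1
  refine mul_left_cancel₀ h.prod_ne_zero ?_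
  simp only [Pi.neg_apply, Finset.sum_apply, Pi.smul_apply, smul_eq_mul]
  rw [← hsum, Finset.mul_sum]
  refine Finset.sum_congr rfl fun j _ => ?_
  rw [hb, ← Finset.mul_prod_erase _ F (Finset.mem_univ j)]
  ring

end IsNormalCrossing

section MinimalGenerators

variable {R k M ι : Type*} [CommRing R] [CommRing k] [Nontrivial k] [AddCommGroup M] [Module R M]
  {χ : R →+* k} {G : ι → M}

lemma card_le_of_span_eq_span_range [Fintype ι]
    (hG : ∀ c : ι → R, ∑ i, c i • G i = 0 → ∀ i, χ (c i) = 0) {T : Finset M}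
    (hT : Submodule.span R (T : Set M) = Submodule.span R (Set.range G)) :
    Fintype.card ι ≤ T.card := by
  classical
  have hGT (i : ι) : ∃ a : T → R, ∑ t, a t • (t : M) = G i := by
    rw [← Submodule.mem_span_range_iff_exists_fun, Subtype.range_coe]
    exact hT ▸ Submodule.subset_span ⟨i, rfl⟩
  have hTG (t : T) : ∃ b : ι → R, ∑ i, b i • G i = (t : M) := by
    rw [← Submodule.mem_span_range_iff_exists_fun, ← hT]
    exact Submodule.subset_span t.2
  choose a ha using hGT
  choose b hb using hTG
  let A : Matrix ι T R := Matrix.of a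
  let B : Matrix T ι R := Matrix.of b
  have hAB : A.map χ * B.map χ = 1 := by
    ext i j
    have hrel : ∑ j, ((A * B) i j - (1 : Matrix ι ι R) i j) • G j = 0 := by
      simp only [sub_smul, Finset.sum_sub_distrib, Matrix.mul_apply, Finset.sum_smul, mul_smul,
        Matrix.one_apply, ite_smul, one_smul, zero_smul, Finset.sum_ite_eq, Finset.mem_univ,
        if_true]
      rw [Finset.sum_comm]
      simp only [← Finset.smul_sum, A, B, Matrix.of_apply, hb, ha, sub_self]
    rw [← Matrix.map_mul, Matrix.map_apply, ← sub_add_cancel ((A * B) i j) ((1 : Matrix ι ι R) i j),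
      map_add, hG _ hrel j, zero_add, ← Matrix.map_apply (f := χ),
      Matrix.map_one _ (map_zero χ) (map_one χ)]
  calc Fintype.card ι = (A.map χ * B.map χ).rank := by rw [hAB, Matrix.rank_one]
    _ ≤ (A.map χ).rank := Matrix.rank_mul_le_left _ _
    _ ≤ Fintype.card T := (A.map χ).rank_le_card_width
    _ = T.card := Fintype.card_coe T

lemma notMem_span_image_compl_singleton [Fintype ι]
    (hG : ∀ c : ι → R, ∑ i, c i • G i = 0 → ∀ i, χ (c i) = 0) (i : ι) :
    G i ∉ Submodule.span R (G '' {i}ᶜ) := by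
  classical
  intro hi
  rw [← Finset.coe_singleton, ← Finset.coe_compl,
    Submodule.mem_span_image_finset_iff_exists_fun'] at hi
  obtain ⟨c, hc⟩ := hi
  have hrel : ∑ j, Function.update (-c) i 1 j • G j = 0 := by
    rw [← Finset.add_sum_erase _ _ (Finset.mem_univ i), Function.update_self, one_smul, ← hc,
      Finset.compl_singleton, ← Finset.sum_add_distrib]
    refine Finset.sum_eq_zero fun j hj => ?_
    rw [Function.update_of_ne (Finset.ne_of_mem_erase hj), Pi.neg_apply, neg_smul, add_neg_cancel]
  have hone := hG _ hrel i
  rw [Function.update_self, map_one] at hone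
  exact one_ne_zero hone

end MinimalGenerators

section Generators

lemma G0_inr {m : ℕ} (F : Fin m → S) (t : Fin 3) :
    G0 F (Sum.inr t) = grad (∏ i, F i) ⨯₃ Pi.single t 1 := by
  ext s
  fin_cases t <;> fin_cases s <;> simp [G0, sigx, sigy, sigz, grad, cross_apply]

variable {n : ℕ}

lemma sum_smul_G0 (F : Fin (n + 1) → S) (a : Fin n → S) (θ : Fin 3 → S) :
    ∑ i, Sum.elim a θ i • G0 F i =
      ∑ j, (Fin.snoc a 0 : Fin (n + 1) → S) j • rho F j + grad (∏ i, F i) ⨯₃ θ := by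
  have hθ : grad (∏ i, F i) ⨯₃ θ = ∑ t, θ t • G0 F (Sum.inr t) := by
    conv_lhs => rw [pi_eq_sum_univ' θ, map_sum]
    simp only [map_smul, G0_inr]
  rw [Fintype.sum_sum_type, Fin.sum_univ_castSucc (n := n), hθ]
  simp only [Sum.elim_inl, Sum.elim_inr, Fin.snoc_castSucc, Fin.snoc_last, zero_smul, add_zero]
  rfl

variable {F : Fin (n + 1) → S} {e : Fin (n + 1) → ℕ}

lemma IsNormalCrossing.D0_prod_eq_span_range_G0 (h : IsNormalCrossing F)
    (hhom : ∀ j, (F j).IsHomogeneous (e j)) :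
    D0 (∏ i, F i) = Submodule.span S (Set.range (G0 F)) := by
  refine le_antisymm (fun v hv => ?_) (Submodule.span_le.mpr ?_)
  · obtain ⟨a, θ, rfl⟩ := h.exists_eq_sum_smul_rho_add_cross hhom
      (h.sum_degree_ne_zero hhom) hv
    have hnormalize : ∑ j, a j • rho F j
        = ∑ j, (Fin.snoc (fun j => a j.castSucc - a (Fin.last n)) 0 : Fin (n + 1) → S) j
          • rho F j := by
      have hsnoc (j : Fin (n + 1)) : (Fin.snoc (fun j => a j.castSucc - a (Fin.last n)) 0 :
          Fin (n + 1) → S) j = a j - a (Fin.last n) := by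
        cases j using Fin.lastCases <;> simp
      simp only [hsnoc, sub_smul, Finset.sum_sub_distrib, ← Finset.smul_sum,
        sum_rho_eq_zero h.prod_ne_zero, smul_zero, sub_zero]
    rw [hnormalize, ← sum_smul_G0]
    exact Submodule.mem_span_range_iff_exists_fun S |>.mpr ⟨_, rfl⟩
  · rintro _ ⟨j | t, rfl⟩
    · exact rho_mem_D0 (h.ne_zero _)
    · rw [G0_inr]
      exact cross_mem_D0 _ _

lemma IsNormalCrossing.constantCoeff_eq_zero_of_sum_smul_G0_eq_zero (h : IsNormalCrossing F)
    (hhom : ∀ j, (F j).IsHomogeneous (e j)) (he : ∀ j, 2 ≤ e j) {c : Fin n ⊕ Fin 3 → S}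
    (hc : ∑ i, c i • G0 F i = 0) : ∀ i, constantCoeff (c i) = 0 := by
  have hF (j : Fin (n + 1)) : constantCoeff (F j) = 0 :=
    constantCoeff_eq_zero_of_isHomogeneous (hhom j) (h.degree_ne_zero (hhom j))
  have hgrad (j : Fin (n + 1)) (t : Fin 3) : constantCoeff (grad (F j) t) = 0 :=
    constantCoeff_eq_zero_of_isHomogeneous (hhom j).pderiv (Nat.sub_pos_of_lt (he j)).ne'
  rw [← Sum.elim_comp_inl_inr c, sum_smul_G0] at hc
  obtain ⟨r, b, ha, hθ⟩ := h.exists_eq_of_sum_smul_rho_add_cross_eq_zero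
    (h.isPrimitiveVector_grad_prod (IsHomogeneous.prod _ _ _ fun j _ => hhom j)
      (h.sum_degree_ne_zero hhom)) hc
  have hcoeff (j : Fin (n + 1)) : constantCoeff
      ((Fin.snoc (c ∘ Sum.inl) 0 : Fin (n + 1) → S) j) = constantCoeff r := by
    rw [ha, map_add, map_mul, hF, zero_mul, add_zero]
  have hr : constantCoeff r = 0 := by rw [← hcoeff (Fin.last n), Fin.snoc_last, map_zero]
  rintro (j | t)
  · simpa [hr] using hcoeff j.castSucc
  · simpa [hgrad] using congrArg constantCoeff (congrFun hθ t)

end Generators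

theorem caseL0_minimal_generators_general {m : ℕ} (hm : 0 < m) {F : Fin m → S}
    (h : IsNormalCrossing F) {e : Fin m → ℕ} (hhom : ∀ j, (F j).IsHomogeneous (e j))
    (he : ∀ j, 2 ≤ e j) :
    D0 (∏ i, F i) = Submodule.span S (Set.range (G0 F)) ∧
    (∀ i : Fin (m - 1) ⊕ Fin 3, G0 F i ∉ Submodule.span S (G0 F '' {i}ᶜ)) ∧
    (∀ T : Finset (Fin 3 → S),
      Submodule.span S (T : Set (Fin 3 → S)) = D0 (∏ i, F i) → m + 2 ≤ T.card) := by
  obtain ⟨n, rfl⟩ := Nat.exists_eq_add_one.mpr hm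
  have hgen := h.D0_prod_eq_span_range_G0 hhom
  have hrel (c : Fin n ⊕ Fin 3 → S) (hc : ∑ i, c i • G0 F i = 0) :=
    h.constantCoeff_eq_zero_of_sum_smul_G0_eq_zero hhom he hc
  refine ⟨hgen, notMem_span_image_compl_singleton hrel, fun T hT => ?_⟩
  simpa using card_le_of_span_eq_span_range hrel (hT.trans hgen)

/-- if `ℓ(C) = 0` (all `e_j ≥ 2`), then `D₀(f)` is generated by
`G = {ρ_1, …, ρ_{m−1}, σ^x, σ^y, σ^z}`, this generating set is minimal (no element lies in
the submodule generated by the others), and every generating set of `D₀(f)` has at least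
`m + 2` elements, so `C` is an `(m+2)`-syzygy curve with exponents
`d_1 = ⋯ = d_{m−1} = d−2`, `d_m = d_{m+1} = d_{m+2} = d−1`. -/
theorem caseL0_minimal_generators
    (m : ℕ) (hm : 4 ≤ m) (F : Fin m → S) (e : Fin m → ℕ)
    (he : ∀ j, 1 ≤ e j)
    (hhom : ∀ j, (F j).IsHomogeneous (e j))
    (hsmooth : ∀ j, ∀ p : Fin 3 → ℂ,
      (∀ t, eval p (pderiv t (F j)) = 0) → p = 0)
    (hnc : ∀ i j : Fin m, i ≠ j → ∀ p : Fin 3 → ℂ, p ≠ 0 →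
      eval p (F i) = 0 → eval p (F j) = 0 →
      LinearIndependent ℂ
        ![fun t => eval p (pderiv t (F i)), fun t => eval p (pderiv t (F j))])
    (htriple : ∀ i j k : Fin m, i ≠ j → i ≠ k → j ≠ k → ∀ p : Fin 3 → ℂ, p ≠ 0 →
      ¬(eval p (F i) = 0 ∧ eval p (F j) = 0 ∧ eval p (F k) = 0))
    (hl0 : ∀ j, 2 ≤ e j) :
    D0 (∏ i, F i) = Submodule.span S (Set.range (G0 F)) ∧
    (∀ i : Fin (m - 1) ⊕ Fin 3, G0 F i ∉ Submodule.span S (G0 F '' {i}ᶜ)) ∧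
    (∀ T : Finset (Fin 3 → S),
      Submodule.span S (T : Set (Fin 3 → S)) = D0 (∏ i, F i) → m + 2 ≤ T.card) :=
  caseL0_minimal_generators_general (by lia) ⟨hsmooth, hnc, htriple⟩ hhom hl0
end
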